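/- Let β > 0 and let m ≥ 1 be an integer. There exists K > 0 depending only on m and β such that for all integers n ≥ 1, |E[Σ_{1≤a<b<c≤n} m(a,c)·m(b,c)] − (m(m−1)/2)·n| ≤ K · n^{1/(2+β)}. -/

import Mathlib

open Finset

/-- A parent sequence of length `N`: for each `t ∈ {2,…,N}` an index `f t ∈ {1,…,t-1}`. -/
def ParentSeq (N : ℕ) : Type :=
  ∀ t : Set.Icc 2 N, Set.Icc 1 ((t : ℕ) - 1)

noncomputable instance (N : ℕ) : Fintype (ParentSeq N) := by
  unfold ParentSeq
  classical
  infer_instance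

/-- The value of a parent sequence at `j` (junk value `0` outside `{2,…,N}`). -/
def pval {N : ℕ} (f : ParentSeq N) (j : ℕ) : ℕ :=
  if h : 2 ≤ j ∧ j ≤ N then (f ⟨j, Set.mem_Icc.mpr h⟩ : ℕ) else 0

/-- The degree `d_t(v_i)` of vertex `i` at time `t` in the tree determined by `f`. -/
def deg {N : ℕ} (f : ParentSeq N) (t i : ℕ) : ℕ :=
  ((Finset.Icc 2 t).filter (fun j => pval f j = i)).card + (if 2 ≤ i then 1 else 0)

/-- The Móri probability of the parent sequence `f`. -/
noncomputable def moriP {N : ℕ} (β : ℝ) (f : ParentSeq N) : ℝ :=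
  ∏ t ∈ Finset.Icc 2 N, ((deg f (t - 1) (pval f t) : ℝ) + β) / ((2 + β) * ((t : ℝ) - 1) - 2)

/-- Expectation of `X` under the Móri measure on parent sequences of length `N`. -/
noncomputable def moriE (N : ℕ) (β : ℝ) (X : ParentSeq N → ℝ) : ℝ :=
  ∑ f : ParentSeq N, moriP β f * X f

open Classical in
/-- Probability of an event under the Móri measure on parent sequences of length `N`. -/
noncomputable def moriPr (N : ℕ) (β : ℝ) (p : ParentSeq N → Prop) : ℝ :=
  ∑ f : ParentSeq N, if p f then moriP β f else 0

/-- The index of the merged vertex containing tree vertex `t` when merging in blocks of `m`. -/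
def blk (m t : ℕ) : ℕ := (t - 1) / m + 1

/-- The number `m(a,b)` of edges joining `u_a` and `u_b` in the Móri graph `G^n_{m,β}`. -/
def mult (n m : ℕ) (f : ParentSeq (n * m)) (a b : ℕ) : ℕ :=
  ((Finset.Icc 2 (n * m)).filter (fun t =>
    (blk m t = a ∧ blk m (pval f t) = b) ∨ (blk m t = b ∧ blk m (pval f t) = a))).card

/-- The degree `d(u_i)` of the merged vertex `u_i` in the Móri graph `G^n_{m,β}`
(a loop contributes `2`). -/
def degU (n m : ℕ) (f : ParentSeq (n * m)) (i : ℕ) : ℕ :=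
  ((Finset.Icc 2 (n * m)).filter (fun t => blk m t = i)).card +
  ((Finset.Icc 2 (n * m)).filter (fun t => blk m (pval f t) = i)).card

/-! The edges from the `m` vertices of block `c` all have upper endpoint `u_c`. Two of them
contribute to exactly one summand `m(a,c) * m(b,c)`, unless one is a loop or both have the same
lower endpoint. So the sum is `n * m * (m - 1) / 2` minus the number of such degenerate pairs.

A degenerate pair in block `c` has probability `O(1 / c)`. For loops this holds because the block
has bounded attachment weight while it is being built, against a total weight of order `c`. For
parallel edges, the expected weight of the block chosen by the first edge is at most `m` times the
second moment of the attachment weights divided by the total weight, by Cauchy–Schwarz. This ratio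
stays bounded since `β > 0`. Summing `1 / c` gives an error `O(1 + log n)`, which is stronger than
`O(n^(1 / (2 + β)))`. -/

/-- The degree of vertex `i` at time `t` in the tree with parent function `g`. Unlike `deg` it takes
a bare function, so that parent functions of trees of different sizes can be compared. -/
def treeDeg (g : ℕ → ℕ) (t i : ℕ) : ℕ :=
  #{j ∈ Icc 2 t | g j = i} + if 2 ≤ i then 1 else 0

/-- `g` is the parent function of a recursive tree on the vertices `1, …, N`. -/
def IsParentFun (N : ℕ) (g : ℕ → ℕ) : Prop :=
  ∀ j, 2 ≤ j → j ≤ N → 1 ≤ g j ∧ g j < j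

/-- The normalization `∑_{k ≤ t} (d_t(v_k) + β)` of the Móri attachment rule at time `t`. -/
noncomputable def totalWeight (β : ℝ) (t : ℕ) : ℝ := (2 + β) * t - 2

section ParentFunctions

variable {N t i : ℕ} {g g' : ℕ → ℕ}

theorem IsParentFun.mono {M : ℕ} (hg : IsParentFun N g) (hMN : M ≤ N) : IsParentFun M g :=
  fun j h2 hj => hg j h2 (hj.trans hMN)

theorem isParentFun_pval (f : ParentSeq N) : IsParentFun N (pval f) := by
  intro j h2 hj
  have hmem := Set.mem_Icc.mp (f ⟨j, Set.mem_Icc.mpr ⟨h2, hj⟩⟩).2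
  simp only [pval, h2, hj, and_self, dite_true]
  dsimp only at hmem
  omega

theorem treeDeg_congr (h : ∀ j ∈ Set.Iic t, g j = g' j) : treeDeg g t = treeDeg g' t := by
  funext i
  unfold treeDeg
  congr 2
  exact filter_congr fun j hj => by rw [h j (mem_Icc.mp hj).2]

theorem treeDeg_succ_le :
    treeDeg g (t + 1) i ≤ treeDeg g t i + if g (t + 1) = i then 1 else 0 := by
  simp only [treeDeg, card_filter]
  rcases Nat.eq_zero_or_pos t with rfl | ht
  · simp
  · rw [sum_Icc_succ_top (by omega)]
    omega

theorem treeDeg_le_one (hg : IsParentFun t g) (hti : t ≤ i) : treeDeg g t i ≤ 1 := by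
  have hnone : #{j ∈ Icc 2 t | g j = i} = 0 := by
    rw [card_eq_zero, filter_eq_empty_iff]
    intro j hj
    have := hg j (mem_Icc.mp hj).1 (mem_Icc.mp hj).2
    have := (mem_Icc.mp hj).2
    omega
  unfold treeDeg
  split_ifs <;> omega

theorem sum_treeDeg (hg : IsParentFun t g) : ∑ k ∈ Icc 1 t, treeDeg g t k = 2 * (t - 1) := by
  have hchildren : ∑ k ∈ Icc 1 t, #{j ∈ Icc 2 t | g j = k} = t - 1 := by
    rw [← card_eq_sum_card_fiberwise, Nat.card_Icc]
    · omega
    · intro j hj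
      have := hg j (mem_Icc.mp hj).1 (mem_Icc.mp hj).2
      simp only [coe_Icc, Set.mem_Icc] at hj ⊢
      omega
  have hparents : ∑ k ∈ Icc 1 t, (if 2 ≤ k then 1 else 0) = t - 1 := by
    rw [← card_filter, show {k ∈ Icc 1 t | 2 ≤ k} = Icc 2 t by ext; simp; omega, Nat.card_Icc]
    omega
  simp only [treeDeg, sum_add_distrib, hchildren, hparents]
  omega

theorem sum_treeDeg_add (β : ℝ) (ht : 1 ≤ t) (hg : IsParentFun t g) :
    ∑ k ∈ Icc 1 t, ((treeDeg g t k : ℝ) + β) = totalWeight β t := by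
  rw [sum_add_distrib, ← Nat.cast_sum, sum_treeDeg hg]
  simp only [sum_const, Nat.card_Icc, nsmul_eq_mul, totalWeight]
  push_cast [Nat.cast_sub ht]
  ring

theorem mul_add_one_le_totalWeight {β : ℝ} (hβ : 0 ≤ β) (ht : 1 ≤ t) :
    β / 2 * ((t : ℝ) + 1) ≤ totalWeight β t := by
  have : (1 : ℝ) ≤ t := by exact_mod_cast ht
  unfold totalWeight
  nlinarith

theorem totalWeight_pos {β : ℝ} (hβ : 0 < β) (ht : 1 ≤ t) : 0 < totalWeight β t :=
  lt_of_lt_of_le (by positivity) (mul_add_one_le_totalWeight hβ.le ht)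

end ParentFunctions

section Expectation

variable {N : ℕ} {β : ℝ}

theorem moriP_nonneg (hβ : 0 ≤ β) (f : ParentSeq N) : 0 ≤ moriP β f := by
  refine prod_nonneg fun t ht => div_nonneg (by positivity) ?_
  have : (2 : ℝ) ≤ t := by exact_mod_cast (mem_Icc.mp ht).1
  nlinarith

theorem moriE_mono (hβ : 0 ≤ β) {X Y : ParentSeq N → ℝ} (h : ∀ f, X f ≤ Y f) :
    moriE N β X ≤ moriE N β Y :=
  sum_le_sum fun f _ => mul_le_mul_of_nonneg_left (h f) (moriP_nonneg hβ f)

theorem moriE_add (X Y : ParentSeq N → ℝ) :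
    moriE N β (fun f => X f + Y f) = moriE N β X + moriE N β Y := by
  simp only [moriE, mul_add, sum_add_distrib]

theorem moriE_const_mul (c : ℝ) (X : ParentSeq N → ℝ) :
    moriE N β (fun f => c * X f) = c * moriE N β X := by
  simp only [moriE, mul_sum, mul_left_comm]

theorem moriE_sum {ι : Type*} (s : Finset ι) (X : ι → ParentSeq N → ℝ) :
    moriE N β (fun f => ∑ i ∈ s, X i f) = ∑ i ∈ s, moriE N β (X i) := by
  simp only [moriE, mul_sum]
  exact sum_comm

theorem moriPr_eq_moriE (p : ParentSeq N → Prop) [DecidablePred p] :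
    moriPr N β p = moriE N β (fun f => if p f then 1 else 0) := by
  simp only [moriPr, moriE, mul_ite, mul_one, mul_zero]
  congr!

theorem moriPr_nonneg (hβ : 0 ≤ β) (p : ParentSeq N → Prop) : 0 ≤ moriPr N β p :=
  sum_nonneg fun f _ => by split_ifs; exacts [moriP_nonneg hβ f, le_rfl]

theorem moriPr_or_le (hβ : 0 ≤ β) (p q : ParentSeq N → Prop) :
    moriPr N β (fun f => p f ∨ q f) ≤ moriPr N β p + moriPr N β q := by
  simp only [moriPr, ← sum_add_distrib]
  refine sum_le_sum fun f _ => ?_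
  have := moriP_nonneg hβ f
  split_ifs <;> first | tauto | linarith

end Expectation

section MarkovProperty

variable {N : ℕ} {β : ℝ}

/-- Extends a tree on `N` vertices by a new vertex `N + 1` attached to the vertex `k`. -/
def ParentSeq.snoc (f : ParentSeq N) (k : Set.Icc 1 N) : ParentSeq (N + 1) := fun t =>
  if h : (t : ℕ) ≤ N then f ⟨t, t.2.1, h⟩ else ⟨k, k.2.1, by have := k.2.2; omega⟩

/-- A tree on `N + 1` vertices is a tree on `N` vertices together with the parent of the last
vertex; this disintegrates the Móri measure into its attachment steps. -/
def ParentSeq.snocEquiv (hN : 1 ≤ N) : ParentSeq N × Set.Icc 1 N ≃ ParentSeq (N + 1) where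
  toFun p := p.1.snoc p.2
  invFun f :=
    (fun t => f ⟨t, t.2.1, t.2.2.trans N.le_succ⟩, f ⟨N + 1, Nat.succ_le_succ hN, le_rfl⟩)
  left_inv p := by
    refine Prod.ext (funext fun t => ?_) (Subtype.ext ?_)
    · simp [snoc, show (t : ℕ) ≤ N from t.2.2]
    · simp [snoc]
  right_inv f := by
    funext t
    by_cases h : (t : ℕ) ≤ N
    · simp [snoc, h]
    · obtain ⟨t, h2, ht⟩ := t
      obtain rfl : t = N + 1 := by dsimp only at h; omega
      ext
      simp [snoc]

theorem pval_snoc (hN : 1 ≤ N) (f : ParentSeq N) (k : Set.Icc 1 N) :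
    pval (f.snoc k) = Function.update (pval f) (N + 1) k := by
  funext j
  rcases eq_or_ne j (N + 1) with rfl | hj
  · rw [Function.update_self, pval, dif_pos ⟨by omega, le_rfl⟩]
    simp [ParentSeq.snoc]
  · rw [Function.update_of_ne hj]
    by_cases hmem : 2 ≤ j ∧ j ≤ N
    · rw [pval, pval, dif_pos hmem, dif_pos ⟨hmem.1, by omega⟩]
      simp [ParentSeq.snoc, hmem.2]
    · rw [pval, pval, dif_neg hmem, dif_neg (by omega)]

theorem treeDeg_update_of_lt (g : ℕ → ℕ) {s t : ℕ} (hst : s < t) (k : ℕ) :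
    treeDeg (Function.update g t k) s = treeDeg g s :=
  treeDeg_congr fun _ hj => Function.update_of_ne (hj.trans_lt hst).ne _ _

theorem moriP_snoc (hN : 1 ≤ N) (f : ParentSeq N) (k : Set.Icc 1 N) :
    moriP β (f.snoc k) =
      moriP β f * ((treeDeg (pval f) N k + β) / totalWeight β N) := by
  have hdeg {M : ℕ} (f : ParentSeq M) (t : ℕ) : deg f t = treeDeg (pval f) t := rfl
  simp only [moriP, hdeg, pval_snoc hN, totalWeight]
  rw [prod_Icc_succ_top (by omega)]
  congr 1
  · refine prod_congr rfl fun t ht => ?_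
    obtain ⟨h2, htN⟩ := mem_Icc.mp ht
    rw [Function.update_of_ne (by omega), treeDeg_update_of_lt _ (by omega)]
  · rw [Function.update_self, treeDeg_update_of_lt _ (by omega)]
    simp

theorem moriE_succ (hN : 1 ≤ N) (X : (ℕ → ℕ) → ℝ) :
    moriE (N + 1) β (fun f => X (pval f)) =
      moriE N β (fun f => (∑ k ∈ Icc 1 N, (treeDeg (pval f) N k + β) *
        X (Function.update (pval f) (N + 1) k)) / totalWeight β N) := by
  unfold moriE
  rw [← (ParentSeq.snocEquiv hN).sum_comp, Fintype.sum_prod_type]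
  refine sum_congr rfl fun f _ => ?_
  have hsnoc (k) : ParentSeq.snocEquiv hN (f, k) = f.snoc k := rfl
  simp only [hsnoc, moriP_snoc hN, pval_snoc hN, sum_div, mul_sum]
  rw [← sum_coe_sort (Icc 1 N)]
  exact Fintype.sum_equiv (Equiv.subtypeEquivRight (by simp)) _ _ fun k => by
    simp only [Equiv.subtypeEquivRight_apply_coe]
    ring

theorem moriE_eq_of_dependsOn (hβ : 0 < β) {u : ℕ} (hu : 1 ≤ u) (huN : u ≤ N)
    {X : (ℕ → ℕ) → ℝ} (hX : DependsOn X (Set.Iic u)) :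
    moriE N β (fun f => X (pval f)) = moriE u β (fun f => X (pval f)) := by
  induction N, huN using Nat.le_induction with
  | base => rfl
  | succ N huN ih =>
    rw [moriE_succ (hu.trans huN), ← ih]
    congr 1
    funext f
    have hfresh (k : ℕ) : X (Function.update (pval f) (N + 1) k) = X (pval f) :=
      hX fun j hj => Function.update_of_ne (by have : j ≤ u := hj; omega) _ _
    simp only [hfresh]
    rw [← sum_mul, sum_treeDeg_add β (hu.trans huN) (isParentFun_pval f),
      mul_div_cancel_left₀ _ (totalWeight_pos hβ (hu.trans huN)).ne']

theorem moriE_const (hβ : 0 < β) (hN : 1 ≤ N) (c : ℝ) : moriE N β (fun _ => c) = c := by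
  have : Unique (ParentSeq 1) :=
    { default := fun t => absurd (t.2.1.trans t.2.2) (by norm_num)
      uniq := fun f => funext fun t => absurd (t.2.1.trans t.2.2) (by norm_num) }
  rw [moriE_eq_of_dependsOn hβ le_rfl hN (X := fun _ => c) fun _ _ _ => rfl]
  simp [moriE, moriP]

theorem moriPr_le_one (hβ : 0 < β) (hN : 1 ≤ N) (p : ParentSeq N → Prop) : moriPr N β p ≤ 1 := by
  classical
  rw [moriPr_eq_moriE]
  refine (moriE_mono hβ.le fun f => ?_).trans_eq (moriE_const hβ hN 1)
  split_ifs <;> norm_num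

theorem moriE_parent (hβ : 0 < β) {u : ℕ} (hu : 1 ≤ u) (huN : u < N) {h : (ℕ → ℕ) → ℕ → ℝ}
    (hh : DependsOn h (Set.Iic u)) :
    moriE N β (fun f => h (pval f) (pval f (u + 1))) =
      moriE N β (fun f => ∑ k ∈ Icc 1 u, (treeDeg (pval f) u k + β) * h (pval f) k)
        / totalWeight β u := by
  have hleft : DependsOn (fun g => h g (g (u + 1))) (Set.Iic (u + 1)) := fun g g' hgg' => by
    dsimp only
    rw [hgg' (u + 1) Set.self_mem_Iic, hh fun j hj => hgg' j (Set.Iic_subset_Iic.mpr u.le_succ hj)]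
  have hright : DependsOn (fun g => (totalWeight β u)⁻¹ *
      ∑ k ∈ Icc 1 u, (treeDeg g u k + β) * h g k) (Set.Iic u) := fun g g' hgg' => by
    simp only [treeDeg_congr hgg', hh hgg']
  rw [div_eq_inv_mul, ← moriE_const_mul, moriE_eq_of_dependsOn hβ hu huN.le hright,
    moriE_eq_of_dependsOn hβ (by omega) huN hleft,
    moriE_succ hu (fun g => h g (g (u + 1)))]
  congr 1
  funext f
  have hfresh (k : ℕ) : h (Function.update (pval f) (u + 1) k) = h (pval f) :=
    hh fun j hj => Function.update_of_ne (Nat.lt_succ_of_le hj).ne _ _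
  simp only [hfresh, Function.update_self, div_eq_inv_mul]

end MarkovProperty

section SecondMoment

variable {β : ℝ} {N t : ℕ} {g : ℕ → ℕ}

/-- The sum of squared attachment weights `∑_{k ≤ t} (d_t(v_k) + β)²`. -/
noncomputable def sqWeight (β : ℝ) (g : ℕ → ℕ) (t : ℕ) : ℝ :=
  ∑ k ∈ Icc 1 t, ((treeDeg g t k : ℝ) + β) ^ 2

/-- The ratio bounding `E[sqWeight β · t]` by `totalWeight β t`. It is the solution of
`β * x = 1 + (1 + β)²`, the increment of `sqWeight` that does not depend on the chosen parent. -/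
noncomputable def secondMomentConst (β : ℝ) : ℝ := (1 + (1 + β) ^ 2) / β

theorem secondMomentConst_nonneg (hβ : 0 ≤ β) : 0 ≤ secondMomentConst β := by
  unfold secondMomentConst
  positivity

theorem sqWeight_succ_le (hβ : 0 ≤ β) (ht : 1 ≤ t) (hg : IsParentFun (t + 1) g) :
    sqWeight β g (t + 1) ≤
      sqWeight β g t + 2 * ((treeDeg g t (g (t + 1)) : ℝ) + β) + (1 + (1 + β) ^ 2) := by
  have hold (k : ℕ) : ((treeDeg g (t + 1) k : ℝ) + β) ^ 2 ≤
      ((treeDeg g t k : ℝ) + β) ^ 2 +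
        if g (t + 1) = k then 2 * ((treeDeg g t k : ℝ) + β) + 1 else 0 := by
    have hsucc : (treeDeg g (t + 1) k : ℝ) ≤ treeDeg g t k + if g (t + 1) = k then 1 else 0 := by
      exact_mod_cast treeDeg_succ_le
    calc ((treeDeg g (t + 1) k : ℝ) + β) ^ 2
        ≤ (treeDeg g t k + (if g (t + 1) = k then 1 else 0) + β) ^ 2 := by gcongr
      _ = _ := by split_ifs <;> ring
  have hnew : (treeDeg g (t + 1) (t + 1) : ℝ) ≤ 1 := by exact_mod_cast treeDeg_le_one hg le_rfl
  have hparent : g (t + 1) ∈ Icc 1 t := by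
    have := hg (t + 1) (by omega) le_rfl
    exact mem_Icc.mpr (by omega)
  calc sqWeight β g (t + 1)
      = ∑ k ∈ Icc 1 t, ((treeDeg g (t + 1) k : ℝ) + β) ^ 2
          + ((treeDeg g (t + 1) (t + 1) : ℝ) + β) ^ 2 := sum_Icc_succ_top (by omega) _
    _ ≤ ∑ k ∈ Icc 1 t, (((treeDeg g t k : ℝ) + β) ^ 2 +
          if g (t + 1) = k then 2 * ((treeDeg g t k : ℝ) + β) + 1 else 0) + (1 + β) ^ 2 := by
        gcongr with k
        exact hold k
    _ = _ := by
        rw [sum_add_distrib, sum_ite_eq, if_pos hparent, sqWeight]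
        ring

theorem moriE_treeDeg_parent_eq (hβ : 0 < β) (ht : 1 ≤ t) (htN : t < N) :
    moriE N β (fun f => (treeDeg (pval f) t (pval f (t + 1)) : ℝ) + β) =
      moriE N β (fun f => sqWeight β (pval f) t) / totalWeight β t := by
  have hdep : DependsOn (fun g k => (treeDeg g t k : ℝ) + β) (Set.Iic t) :=
    fun g g' hgg' => by simp only [treeDeg_congr hgg']
  rw [moriE_parent hβ ht htN hdep]
  simp only [sqWeight, sq]

-- Conditionally on the tree at time `t`, the attachment step multiplies `sqWeight` by at most
-- `1 + 2 / totalWeight β t`, up to a constant; since `totalWeight` grows by `2 + β > 2`, linear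
-- growth is preserved.
theorem moriE_sqWeight_le (hβ : 0 < β) (ht : 1 ≤ t) (htN : t ≤ N) :
    moriE N β (fun f => sqWeight β (pval f) t) ≤ secondMomentConst β * totalWeight β t := by
  have hconst : secondMomentConst β * β = 1 + (1 + β) ^ 2 := div_mul_cancel₀ _ hβ.ne'
  induction t, ht using Nat.le_induction with
  | base =>
    rw [← moriE_const hβ htN (secondMomentConst β * totalWeight β 1)]
    refine moriE_mono hβ.le fun f => ?_
    have htotal : totalWeight β 1 = β := by norm_num [totalWeight]
    have hsq : sqWeight β (pval f) 1 = β ^ 2 := by simp [sqWeight, treeDeg]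
    rw [htotal, hconst, hsq]
    nlinarith
  | succ t ht ih =>
    set W := totalWeight β t with hW
    have hWpos : 0 < W := totalWeight_pos hβ ht
    have hWsucc : totalWeight β (t + 1) = W + 2 + β := by
      rw [hW, totalWeight, totalWeight]
      push_cast
      ring
    have hquot : moriE N β (fun f => sqWeight β (pval f) t) / W ≤ secondMomentConst β :=
      (div_le_iff₀ hWpos).mpr (ih (by omega))
    calc moriE N β (fun f => sqWeight β (pval f) (t + 1))
        ≤ moriE N β (fun f => sqWeight β (pval f) t +
            2 * ((treeDeg (pval f) t (pval f (t + 1)) : ℝ) + β) + (1 + (1 + β) ^ 2)) :=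
          moriE_mono hβ.le fun f => sqWeight_succ_le hβ.le ht ((isParentFun_pval f).mono htN)
      _ = moriE N β (fun f => sqWeight β (pval f) t) +
            2 * (moriE N β (fun f => sqWeight β (pval f) t) / W) + secondMomentConst β * β := by
          rw [moriE_add, moriE_add, moriE_const_mul,
            moriE_treeDeg_parent_eq hβ ht htN, moriE_const hβ (by omega), hconst]
      _ ≤ secondMomentConst β * W + 2 * secondMomentConst β + secondMomentConst β * β := by
          gcongr
          exact ih (by omega)
      _ = secondMomentConst β * totalWeight β (t + 1) := by
          rw [hWsucc]
          ring

end SecondMoment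

section Blocks

variable {m n c t : ℕ}

/-- The tree vertices that are merged into `u_c`. -/
def block (m c : ℕ) : Finset ℕ := Ioc ((c - 1) * m) (c * m)

theorem mem_block_iff (hm : 1 ≤ m) (ht : 1 ≤ t) : t ∈ block m c ↔ blk m t = c := by
  rcases Nat.eq_zero_or_pos c with rfl | hc
  · simp [block, blk]
  · have hdiv : blk m t = c ↔ (t - 1) / m = c - 1 := by
      unfold blk
      omega
    rw [hdiv, Nat.div_eq_iff hm, block, mem_Ioc, ← Nat.sub_add_cancel hc]
    simp only [add_mul, Nat.add_sub_cancel]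
    omega

theorem card_block (hc : 1 ≤ c) : #(block m c) = m := by
  rw [block, Nat.card_Ioc, ← Nat.sub_mul, Nat.sub_sub_self hc, one_mul]

theorem le_of_mem_block (hm : 1 ≤ m) (ht : t ∈ block m c) : c ≤ t := by
  have := (mem_Ioc.mp ht).1
  have := Nat.le_mul_of_pos_right (c - 1) hm
  omega

theorem le_mul_of_mem_block (hcn : c ≤ n) (ht : t ∈ block m c) : t ≤ n * m :=
  (mem_Ioc.mp ht).2.trans (Nat.mul_le_mul_right m hcn)

theorem lt_add_of_mem_block {s : ℕ} (hs : s ∈ block m c) (ht : t ∈ block m c) : t < s + m := by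
  have := Nat.sub_mul c 1 m
  simp only [block, mem_Ioc] at hs ht
  omega

theorem blk_mono (m : ℕ) : Monotone (blk m) := fun _ _ h =>
  Nat.succ_le_succ (Nat.div_le_div_right (Nat.sub_le_sub_right h 1))

theorem card_filter_blk_le (hm : 1 ≤ m) (t c : ℕ) : #{k ∈ Icc 1 t | blk m k = c} ≤ m := by
  rcases Nat.eq_zero_or_pos c with rfl | hc
  · simp [blk]
  · refine (card_le_card fun k hk => ?_).trans (card_block hc).le
    obtain ⟨hk, hblk⟩ := mem_filter.mp hk
    exact (mem_block_iff hm (mem_Icc.mp hk).1).mpr hblk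

theorem blk_parent_le {N : ℕ} (f : ParentSeq N) (hm : 1 ≤ m) (htN : t ≤ N) (ht : t ∈ block m c) :
    blk m (pval f t) ≤ c := by
  have ht1 : 1 ≤ t := Nat.one_le_of_lt (mem_Ioc.mp ht).1
  have hparent : pval f t ≤ t := by
    rcases ht1.eq_or_lt with rfl | h2
    · simp [pval]
    · exact (isParentFun_pval f t h2 htN).2.le
  exact (blk_mono m hparent).trans ((mem_block_iff hm ht1).mp ht).le

end Blocks

section BlockWeight

variable {β : ℝ} {m N c u v : ℕ} {g : ℕ → ℕ}

/-- The attachment weight `∑ (d_t(v_k) + β)` of the vertices `v_k`, `k ≤ t`, lying in block `c`. -/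
noncomputable def blockWeight (m : ℕ) (β : ℝ) (g : ℕ → ℕ) (t c : ℕ) : ℝ :=
  ∑ k ∈ Icc 1 t with blk m k = c, ((treeDeg g t k : ℝ) + β)

theorem blockWeight_congr {g' : ℕ → ℕ} (h : ∀ j ∈ Set.Iic u, g j = g' j) :
    blockWeight m β g u = blockWeight m β g' u := by
  funext c
  simp only [blockWeight, treeDeg_congr h]

theorem blockWeight_succ_le (hβ : 0 ≤ β) (hg : IsParentFun (u + 1) g) :
    blockWeight m β g (u + 1) c ≤ blockWeight m β g u c + (2 + β) := by
  have hold (k : ℕ) : (if blk m k = c then (treeDeg g (u + 1) k : ℝ) + β else 0) ≤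
      (if blk m k = c then (treeDeg g u k : ℝ) + β else 0) + if g (u + 1) = k then 1 else 0 := by
    have hsucc : (treeDeg g (u + 1) k : ℝ) ≤ treeDeg g u k + if g (u + 1) = k then 1 else 0 := by
      exact_mod_cast treeDeg_succ_le
    split_ifs at hsucc ⊢ <;> linarith
  have hnew : (if blk m (u + 1) = c then (treeDeg g (u + 1) (u + 1) : ℝ) + β else 0) ≤ 1 + β := by
    have : (treeDeg g (u + 1) (u + 1) : ℝ) ≤ 1 := by exact_mod_cast treeDeg_le_one hg le_rfl
    split_ifs <;> linarith
  have hchild : ∑ k ∈ Icc 1 u, (if g (u + 1) = k then (1 : ℝ) else 0) ≤ 1 := by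
    rw [sum_ite_eq]
    split_ifs <;> norm_num
  simp only [blockWeight, sum_filter]
  rw [sum_Icc_succ_top (by omega)]
  have hsum := sum_le_sum fun k (_ : k ∈ Icc 1 u) => hold k
  rw [sum_add_distrib] at hsum
  linarith

theorem blockWeight_le_add (hβ : 0 ≤ β) (hg : IsParentFun u g) (hvu : v ≤ u) :
    blockWeight m β g u c ≤ blockWeight m β g v c + ((u : ℝ) - v) * (2 + β) := by
  induction u, hvu using Nat.le_induction with
  | base => simp
  | succ u _ ih =>
    have := blockWeight_succ_le (m := m) (c := c) hβ hg
    have := ih (hg.mono u.le_succ)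
    push_cast
    linarith

theorem blockWeight_le_of_succ_mem_block (hβ : 0 ≤ β) (hm : 1 ≤ m) (hg : IsParentFun u g)
    (hu : u + 1 ∈ block m c) : blockWeight m β g u c ≤ m * (2 + β) := by
  set v := (c - 1) * m
  have hempty : blockWeight m β g v c = 0 := by
    refine sum_eq_zero_iff_of_nonneg (fun _ _ => by positivity) |>.mpr fun k hk => ?_
    obtain ⟨hk, hblk⟩ := mem_filter.mp hk
    have := (mem_Ioc.mp ((mem_block_iff hm (mem_Icc.mp hk).1).mpr hblk)).1
    have := (mem_Icc.mp hk).2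
    omega
  have hlow := (mem_Ioc.mp hu).1
  have hlen : (u : ℝ) ≤ v + m := by
    have := (mem_Ioc.mp hu).2
    have := Nat.sub_mul c 1 m
    exact_mod_cast (by omega : u ≤ v + m)
  calc blockWeight m β g u c
      ≤ blockWeight m β g v c + ((u : ℝ) - v) * (2 + β) := blockWeight_le_add hβ hg (by omega)
    _ ≤ m * (2 + β) := by
        rw [hempty, zero_add]
        gcongr
        linarith

-- Cauchy–Schwarz on each fibre of `φ`.
theorem sum_mul_sum_fiber_le {ι κ : Type*} [DecidableEq κ] (s : Finset ι) (φ : ι → κ) (x : ι → ℝ)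
    (hφ : ∀ c, #{i ∈ s | φ i = c} ≤ m) :
    ∑ i ∈ s, x i * ∑ j ∈ s with φ j = φ i, x j ≤ m * ∑ i ∈ s, x i ^ 2 := by
  have hmaps : ∀ i ∈ s, φ i ∈ s.image φ := fun i hi => mem_image_of_mem φ hi
  rw [← sum_fiberwise_of_maps_to hmaps, ← sum_fiberwise_of_maps_to hmaps (fun i => x i ^ 2),
    mul_sum]
  refine sum_le_sum fun c _ => ?_
  calc ∑ i ∈ s with φ i = c, x i * ∑ j ∈ s with φ j = φ i, x j
      = (∑ i ∈ s with φ i = c, x i) ^ 2 := by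
        rw [sq, sum_mul]
        exact sum_congr rfl fun i hi => by rw [(mem_filter.mp hi).2]
    _ ≤ #{i ∈ s | φ i = c} * ∑ i ∈ s with φ i = c, x i ^ 2 := sq_sum_le_card_mul_sum_sq
    _ ≤ m * ∑ i ∈ s with φ i = c, x i ^ 2 := by
        gcongr
        exact hφ c

theorem sum_mul_blockWeight_le (hm : 1 ≤ m) :
    ∑ k ∈ Icc 1 u, ((treeDeg g u k : ℝ) + β) * blockWeight m β g u (blk m k) ≤
      m * sqWeight β g u :=
  sum_mul_sum_fiber_le _ _ _ (card_filter_blk_le hm u)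

theorem moriPr_blk_parent_eq (hβ : 0 < β) (hu : 1 ≤ u) (huN : u < N) {b : (ℕ → ℕ) → ℕ}
    (hb : DependsOn b (Set.Iic u)) :
    moriPr N β (fun f => blk m (pval f (u + 1)) = b (pval f)) =
      moriE N β (fun f => blockWeight m β (pval f) u (b (pval f))) / totalWeight β u := by
  have hdep : DependsOn (fun g k => if blk m k = b g then (1 : ℝ) else 0) (Set.Iic u) :=
    fun g g' hgg' => by simp only [hb hgg']
  rw [moriPr_eq_moriE, moriE_parent hβ hu huN hdep]
  simp only [mul_ite, mul_one, mul_zero, blockWeight, sum_filter]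

theorem moriE_blockWeight_parent_le (hβ : 0 < β) (hm : 1 ≤ m) (hv : 1 ≤ v) (hvN : v < N) :
    moriE N β (fun f => blockWeight m β (pval f) v (blk m (pval f (v + 1)))) ≤
      m * secondMomentConst β := by
  have hdep : DependsOn (fun g k => blockWeight m β g v (blk m k)) (Set.Iic v) :=
    fun g g' hgg' => by simp only [blockWeight_congr hgg']
  rw [moriE_parent hβ hv hvN hdep, div_le_iff₀ (totalWeight_pos hβ hv), mul_assoc]
  calc _ ≤ moriE N β (fun f => m * sqWeight β (pval f) v) :=
        moriE_mono hβ.le fun f => sum_mul_blockWeight_le hm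
    _ ≤ m * (secondMomentConst β * totalWeight β v) := by
        rw [moriE_const_mul]
        gcongr
        exact moriE_sqWeight_le hβ hv hvN.le

theorem moriPr_loop_le (hβ : 0 < β) (hm : 1 ≤ m) (hu : 1 ≤ u) (huN : u < N)
    (huc : u + 1 ∈ block m c) :
    moriPr N β (fun f => blk m (pval f (u + 1)) = c) ≤ m * (2 + β) / totalWeight β u := by
  rw [moriPr_blk_parent_eq hβ hu huN (b := fun _ => c) fun _ _ _ => rfl]
  refine div_le_div_of_nonneg_right ?_ (totalWeight_pos hβ hu).le
  rw [← moriE_const hβ (hu.trans huN.le) (m * (2 + β))]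
  exact moriE_mono hβ.le fun f =>
    blockWeight_le_of_succ_mem_block hβ.le hm ((isParentFun_pval f).mono huN.le) huc

theorem moriPr_parallel_le (hβ : 0 < β) (hm : 1 ≤ m) (hv : 1 ≤ v) (hvu : v < u)
    (huv : u ≤ v + m) (huN : u < N) :
    moriPr N β (fun f => blk m (pval f (u + 1)) = blk m (pval f (v + 1))) ≤
      m * (secondMomentConst β + (2 + β)) / totalWeight β u := by
  have hu : 1 ≤ u := by omega
  have huv' : (u : ℝ) ≤ v + m := by exact_mod_cast huv
  rw [moriPr_blk_parent_eq hβ hu huN (b := fun g => blk m (g (v + 1)))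
    fun g g' hgg' => by dsimp only; rw [hgg' (v + 1) hvu]]
  refine div_le_div_of_nonneg_right ?_ (totalWeight_pos hβ hu).le
  calc moriE N β (fun f => blockWeight m β (pval f) u (blk m (pval f (v + 1))))
      ≤ moriE N β (fun f =>
          blockWeight m β (pval f) v (blk m (pval f (v + 1))) + m * (2 + β)) := by
        refine moriE_mono hβ.le fun f => ?_
        refine (blockWeight_le_add hβ.le ((isParentFun_pval f).mono huN.le) hvu.le).trans ?_
        gcongr
        linarith
    _ ≤ m * secondMomentConst β + m * (2 + β) := by
        rw [moriE_add, moriE_const hβ (by omega)]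
        gcongr
        exact moriE_blockWeight_parent_le hβ hm hv (hvu.trans huN)
    _ = m * (secondMomentConst β + (2 + β)) := by ring

end BlockWeight

section Pairs

/-- The pair `p` of edges, with lower endpoints `φ p.1` and `φ p.2` and common upper endpoint `c`,
contributes to `∑ m(a,c) * m(b,c)` over `a < b < c`, with `a = φ p.1` and `b = φ p.2`. -/
abbrev IsCherry {ι α : Type*} [LT α] (φ : ι → α) (c : α) (p : ι × ι) : Prop :=
  φ p.1 < φ p.2 ∧ φ p.2 < c

/-- The pair `p` of edges, with lower endpoints `φ p.1` and `φ p.2` and common upper endpoint `c`,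
contains a loop or consists of parallel edges. -/
abbrev IsDegenerate {ι α : Type*} (φ : ι → α) (c : α) (p : ι × ι) : Prop :=
  φ p.1 = c ∨ φ p.2 = c ∨ φ p.1 = φ p.2

variable {ι : Type*}

theorem two_mul_card_isCherry_add_card_isDegenerate {α : Type*} [LinearOrder α] {φ : ι → α}
    {c : α} {s : Finset ι} (hφ : ∀ t ∈ s, φ t ≤ c) :
    2 * #{p ∈ s.offDiag | IsCherry φ c p} + #{p ∈ s.offDiag | IsDegenerate φ c p} =
      #s.offDiag := by
  have hswap : #{p ∈ s.offDiag | IsCherry φ c p} = #{p ∈ s.offDiag | IsCherry φ c p.swap} :=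
    card_nbij' Prod.swap Prod.swap (by simp [Set.MapsTo]; tauto) (by simp [Set.MapsTo]; tauto)
      (by simp [Set.LeftInvOn]) (by simp [Set.LeftInvOn])
  rw [two_mul]
  nth_rw 2 [hswap]
  rw [card_eq_sum_ones s.offDiag]
  simp only [card_filter, ← sum_add_distrib]
  refine sum_congr rfl fun p hp => ?_
  obtain ⟨h₁, h₂, -⟩ := mem_offDiag.mp hp
  have hφ₁ := hφ _ h₁
  have hφ₂ := hφ _ h₂
  grind

theorem sum_card_fiber_mul_card_fiber {φ : ι → ℕ} {c : ℕ} {s : Finset ι}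
    (hφ : ∀ t ∈ s, 1 ≤ φ t) :
    ∑ a ∈ Ico 1 c, ∑ b ∈ Ioo a c, #{t ∈ s | φ t = a} * #{t ∈ s | φ t = b} =
      #{p ∈ s.offDiag | IsCherry φ c p} := by
  have hfst : Set.MapsTo (fun p : ι × ι => φ p.1)
      ({p ∈ s.offDiag | IsCherry φ c p} : Finset (ι × ι)) (Ico 1 c : Finset ℕ) := by
    intro p hp
    simp only [mem_coe, mem_filter, mem_offDiag] at hp
    exact mem_Ico.mpr ⟨hφ _ hp.1.1, hp.2.1.trans hp.2.2⟩
  rw [card_eq_sum_card_fiberwise hfst]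
  refine sum_congr rfl fun a _ => ?_
  have hsnd : Set.MapsTo (fun p : ι × ι => φ p.2)
      ({p ∈ {p ∈ s.offDiag | IsCherry φ c p} | φ p.1 = a} : Finset (ι × ι))
      (Ioo a c : Finset ℕ) := by
    intro p hp
    simp only [mem_coe, mem_filter] at hp
    exact mem_Ioo.mpr ⟨hp.2 ▸ hp.1.2.1, hp.1.2.2⟩
  rw [card_eq_sum_card_fiberwise hsnd]
  refine sum_congr rfl fun b hb => ?_
  rw [← card_product]
  congr 1
  ext p
  have := mem_Ioo.mp hb
  simp only [mem_product, mem_filter, mem_offDiag]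
  grind

theorem sum_triangle_comm {M : Type*} [AddCommMonoid M] (n : ℕ) (F : ℕ → ℕ → ℕ → M) :
    ∑ a ∈ Icc 1 n, ∑ b ∈ Ioc a n, ∑ c ∈ Ioc b n, F a b c =
      ∑ c ∈ Icc 1 n, ∑ a ∈ Ico 1 c, ∑ b ∈ Ioo a c, F a b c := by
  have hinner (a : ℕ) : ∑ b ∈ Ioc a n, ∑ c ∈ Ioc b n, F a b c =
      ∑ c ∈ Ioc a n, ∑ b ∈ Ioo a c, F a b c :=
    sum_comm' fun b c => by simp only [mem_Ioc, mem_Ioo]; omega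
  simp only [hinner]
  exact sum_comm' fun a c => by simp only [mem_Icc, mem_Ioc, mem_Ico]; omega

end Pairs

section AdjacentPairs

variable {β : ℝ} {m n N c u v : ℕ}

-- The root `v_1` has no outgoing edge; since `pval f 1 = 0` and `blk m 0 = 1`, it is treated as a
-- loop at `u_1`.
theorem mult_eq_card (hm : 1 ≤ m) (f : ParentSeq (n * m)) {a : ℕ} (ha : 1 ≤ a) (hac : a < c)
    (hcn : c ≤ n) : mult n m f a c = #{t ∈ block m c | blk m (pval f t) = a} := by
  unfold mult
  congr 1
  ext t
  simp only [mem_filter, mem_Icc]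
  constructor
  · rintro ⟨⟨h2, htN⟩, ⟨rfl, hc⟩ | ⟨hc, rfl⟩⟩
    · have := blk_mono m (isParentFun_pval f t h2 htN).2.le
      omega
    · exact ⟨(mem_block_iff hm (by omega)).mpr hc, rfl⟩
  · rintro ⟨ht, hfa⟩
    have := le_of_mem_block hm ht
    exact ⟨⟨by omega, le_mul_of_mem_block hcn ht⟩,
      Or.inr ⟨(mem_block_iff hm (by omega)).mp ht, hfa⟩⟩

theorem sum_mult_mul_mult_eq (hm : 1 ≤ m) (f : ParentSeq (n * m)) :
    ∑ a ∈ Icc 1 n, ∑ b ∈ Ioc a n, ∑ c ∈ Ioc b n, mult n m f a c * mult n m f b c =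
      ∑ c ∈ Icc 1 n, #{p ∈ (block m c).offDiag | IsCherry (fun t => blk m (pval f t)) c p} := by
  rw [sum_triangle_comm]
  refine sum_congr rfl fun c hc => ?_
  rw [← sum_card_fiber_mul_card_fiber (φ := fun t => blk m (pval f t)) fun t _ => Nat.succ_pos _]
  refine sum_congr rfl fun a ha => sum_congr rfl fun b hb => ?_
  have hcn := (mem_Icc.mp hc).2
  obtain ⟨ha1, hac⟩ := mem_Ico.mp ha
  obtain ⟨hab, hbc⟩ := mem_Ioo.mp hb
  rw [mult_eq_card hm f ha1 hac hcn, mult_eq_card hm f (ha1.trans hab.le) hbc hcn]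

theorem sum_mult_mul_mult_eq_sub (hm : 1 ≤ m) (f : ParentSeq (n * m)) :
    ∑ a ∈ Icc 1 n, ∑ b ∈ Ioc a n, ∑ c ∈ Ioc b n, (mult n m f a c : ℝ) * (mult n m f b c : ℝ) =
      (m : ℝ) * (m - 1) / 2 * n + -(1 / 2) * ∑ c ∈ Icc 1 n, ∑ p ∈ (block m c).offDiag,
        if IsDegenerate (fun t => blk m (pval f t)) c p then 1 else 0 := by
  have hblock (c : ℕ) (hc : c ∈ Icc 1 n) :
      (#{p ∈ (block m c).offDiag | IsCherry (fun t => blk m (pval f t)) c p} : ℝ) =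
        (m : ℝ) * (m - 1) / 2 + -(1 / 2) * ∑ p ∈ (block m c).offDiag,
          if IsDegenerate (fun t => blk m (pval f t)) c p then 1 else 0 := by
    obtain ⟨hc1, hcn⟩ := mem_Icc.mp hc
    have hcount := two_mul_card_isCherry_add_card_isDegenerate fun t ht =>
      blk_parent_le f hm (le_mul_of_mem_block hcn ht) ht
    rw [offDiag_card, card_block hc1, ← Nat.mul_sub_one] at hcount
    rw [← natCast_card_filter]
    have hcount' := congrArg (Nat.cast (R := ℝ)) hcount
    push_cast [Nat.cast_sub hm] at hcount'
    linarith
  have hcast := congrArg (Nat.cast (R := ℝ)) (sum_mult_mul_mult_eq hm f)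
  push_cast at hcast
  rw [hcast, sum_congr rfl hblock, sum_add_distrib, ← mul_sum, sum_const, Nat.card_Icc,
    Nat.add_sub_cancel, nsmul_eq_mul, mul_comm (n : ℝ)]

/-- The constant `C` such that a pair of edges with common upper endpoint `u_c` is degenerate with
probability at most `C / c`. -/
noncomputable def degeneracyConst (m : ℕ) (β : ℝ) : ℝ :=
  2 * m * (3 * (2 + β) + secondMomentConst β) / β

theorem one_le_degeneracyConst (hβ : 0 < β) (hm : 1 ≤ m) : 1 ≤ degeneracyConst m β := by
  have hm' : (1 : ℝ) ≤ m := by exact_mod_cast hm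
  have := secondMomentConst_nonneg hβ.le
  rw [degeneracyConst, le_div_iff₀ hβ]
  nlinarith

theorem moriPr_isDegenerate_succ_le (hβ : 0 < β) (hm : 1 ≤ m) (hv : 1 ≤ v) (hvu : v < u)
    (huN : u < N) (hvc : v + 1 ∈ block m c) (huc : u + 1 ∈ block m c) :
    moriPr N β (fun f => IsDegenerate (fun t => blk m (pval f t)) c (v + 1, u + 1)) ≤
      degeneracyConst m β / c := by
  have hcv := le_of_mem_block hm hvc
  have hlen := lt_add_of_mem_block hvc huc
  have : (0 : ℝ) < c := by
    exact_mod_cast Nat.pos_of_ne_zero fun h => by simp [h, block] at hvc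
  have htotal {w : ℕ} (hw : 1 ≤ w) (hcw : c ≤ w + 1) : β / 2 * c ≤ totalWeight β w := by
    refine le_trans ?_ (mul_add_one_le_totalWeight hβ.le hw)
    gcongr
    exact_mod_cast hcw
  have htotal_v := htotal hv hcv
  have htotal_u := htotal (w := u) (by omega) (by omega)
  have := secondMomentConst_nonneg hβ.le
  have hloop_v := moriPr_loop_le hβ hm hv (hvu.trans huN) hvc
  have hloop_u := moriPr_loop_le hβ hm (by omega) huN huc
  have hparallel := moriPr_parallel_le hβ hm hv hvu (by omega) huN
  calc moriPr N β (fun f => IsDegenerate (fun t => blk m (pval f t)) c (v + 1, u + 1))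
      ≤ m * (2 + β) / totalWeight β v + (m * (2 + β) / totalWeight β u +
          m * (secondMomentConst β + (2 + β)) / totalWeight β u) := by
        refine (moriPr_or_le hβ.le _ _).trans (add_le_add hloop_v ?_)
        exact (moriPr_or_le hβ.le _ _).trans <| add_le_add hloop_u <| by
          simpa only [eq_comm] using hparallel
    _ ≤ m * (2 + β) / (β / 2 * c) + (m * (2 + β) / (β / 2 * c) +
          m * (secondMomentConst β + (2 + β)) / (β / 2 * c)) := by gcongr
    _ = degeneracyConst m β / c := by
        unfold degeneracyConst
        field_simp
        ring

theorem moriPr_isDegenerate_le (hβ : 0 < β) (hm : 1 ≤ m) (hcN : c * m ≤ N) {p : ℕ × ℕ}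
    (hp : p ∈ (block m c).offDiag) :
    moriPr N β (fun f => IsDegenerate (fun t => blk m (pval f t)) c p) ≤
      degeneracyConst m β / c := by
  obtain ⟨s, t⟩ := p
  wlog hst : s < t generalizing s t
  · refine le_trans (le_of_eq ?_) (this t s ?_ ?_)
    · congr! 2 with f
      grind
    · grind
    · grind
  obtain ⟨hs, ht, -⟩ := mem_offDiag.mp hp
  have hcs := le_of_mem_block hm hs
  have htN := (mem_Ioc.mp ht).2.trans hcN
  dsimp only at hs ht hcs htN
  obtain ⟨v, rfl⟩ := Nat.exists_eq_add_one_of_ne_zero (Nat.ne_zero_of_lt (mem_Ioc.mp hs).1)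
  obtain ⟨u, rfl⟩ := Nat.exists_eq_add_one_of_ne_zero (Nat.ne_zero_of_lt hst)
  rcases Nat.eq_zero_or_pos v with rfl | hv
  · obtain rfl : c = 1 :=
      le_antisymm hcs (Nat.pos_of_ne_zero fun h => by simp [h, block] at hs)
    simpa using (moriPr_le_one hβ (by omega) _).trans (one_le_degeneracyConst hβ hm)
  · exact moriPr_isDegenerate_succ_le hβ hm hv (by omega) htN hs ht

end AdjacentPairs

theorem one_add_log_le_rpow {x ε : ℝ} (hx : 1 ≤ x) (hε : 0 < ε) :
    1 + Real.log x ≤ (1 + 1 / ε) * x ^ ε := by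
  have hlog := Real.log_le_rpow_div (zero_le_one.trans hx) hε
  have hone := Real.one_le_rpow hx hε.le
  calc 1 + Real.log x ≤ x ^ ε + x ^ ε / ε := add_le_add hone hlog
    _ = (1 + 1 / ε) * x ^ ε := by ring

theorem sum_Icc_one_div_le (n : ℕ) : ∑ c ∈ Icc 1 n, (1 : ℝ) / c ≤ 1 + Real.log n := by
  have := harmonic_le_one_add_log n
  rw [harmonic_eq_sum_Icc] at this
  push_cast at this
  simpa only [one_div] using this

theorem sum_moriPr_isDegenerate_le {β : ℝ} (hβ : 0 < β) {m : ℕ} (hm : 1 ≤ m) (n : ℕ) :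
    ∑ c ∈ Icc 1 n, ∑ p ∈ (block m c).offDiag,
        moriPr (n * m) β (fun f => IsDegenerate (fun t => blk m (pval f t)) c p) ≤
      m * m * degeneracyConst m β * (1 + Real.log n) := by
  have := one_le_degeneracyConst hβ hm
  calc _ ≤ ∑ c ∈ Icc 1 n, m * m * degeneracyConst m β * (1 / c) := by
        refine sum_le_sum fun c hc => ?_
        obtain ⟨hc1, hcn⟩ := mem_Icc.mp hc
        have hcard : #(block m c).offDiag ≤ m * m := by
          rw [offDiag_card, card_block hc1]
          exact Nat.sub_le _ _
        calc _ ≤ #(block m c).offDiag * (degeneracyConst m β / c) := by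
              rw [← nsmul_eq_mul]
              exact sum_le_card_nsmul _ _ _ fun p hp =>
                moriPr_isDegenerate_le hβ hm (Nat.mul_le_mul_right m hcn) hp
          _ ≤ ((m * m : ℕ) : ℝ) * (degeneracyConst m β / c) := by gcongr
          _ = m * m * degeneracyConst m β * (1 / c) := by
              push_cast
              ring
    _ ≤ _ := by
        rw [← mul_sum]
        gcongr
        exact sum_Icc_one_div_le n

theorem moriE_sum_mult_mul_mult_eq {β : ℝ} (hβ : 0 < β) {m n : ℕ} (hm : 1 ≤ m) (hn : 1 ≤ n) :
    moriE (n * m) β (fun f => ∑ a ∈ Icc 1 n, ∑ b ∈ Ioc a n, ∑ c ∈ Ioc b n,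
        (mult n m f a c : ℝ) * (mult n m f b c : ℝ)) =
      (m : ℝ) * (m - 1) / 2 * n + -(1 / 2) * ∑ c ∈ Icc 1 n, ∑ p ∈ (block m c).offDiag,
        moriPr (n * m) β (fun f => IsDegenerate (fun t => blk m (pval f t)) c p) := by
  simp only [sum_mult_mul_mult_eq_sub hm]
  rw [moriE_add, moriE_const hβ (Nat.mul_pos hn hm), moriE_const_mul, moriE_sum]
  simp only [moriE_sum, moriPr_eq_moriE]

theorem total_adjacent_pairs_largest_index_general (β : ℝ) (hβ : 0 < β) (m : ℕ) (hm : 1 ≤ m) :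
    ∃ K : ℝ, 0 < K ∧ ∀ n : ℕ, 1 ≤ n →
      |moriE (n * m) β
          (fun f => ∑ a ∈ Finset.Icc 1 n, ∑ b ∈ Finset.Ioc a n, ∑ c ∈ Finset.Ioc b n,
            (mult n m f a c : ℝ) * (mult n m f b c : ℝ))
        - ((m : ℝ) * ((m : ℝ) - 1) / 2) * (n : ℝ)| ≤ K * (1 + Real.log n) := by
  have hconst := one_le_degeneracyConst hβ hm
  have : (1 : ℝ) ≤ m := by exact_mod_cast hm
  refine ⟨m * m * degeneracyConst m β, by positivity, fun n hn => ?_⟩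
  have hnonneg : 0 ≤ ∑ c ∈ Icc 1 n, ∑ p ∈ (block m c).offDiag,
      moriPr (n * m) β (fun f => IsDegenerate (fun t => blk m (pval f t)) c p) :=
    sum_nonneg fun c _ => sum_nonneg fun p _ => moriPr_nonneg hβ.le _
  have hle := sum_moriPr_isDegenerate_le hβ hm n
  rw [moriE_sum_mult_mul_mult_eq hβ hm hn, add_sub_cancel_left, abs_le]
  constructor <;> linarith

/-- The total number of pairs of adjacent half-edges in `G^n_{m,β}` whose common vertex has
the largest index is `(m(m−1)/2)·n + O(n^{1/(2+β)})` in expectation. -/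
theorem total_adjacent_pairs_largest_index (β : ℝ) (hβ : 0 < β) (m : ℕ) (hm : 1 ≤ m) :
    ∃ K : ℝ, 0 < K ∧ ∀ n : ℕ, 1 ≤ n →
      |moriE (n * m) β
          (fun f => ∑ a ∈ Finset.Icc 1 n, ∑ b ∈ Finset.Ioc a n, ∑ c ∈ Finset.Ioc b n,
            (mult n m f a c : ℝ) * (mult n m f b c : ℝ))
        - ((m : ℝ) * ((m : ℝ) - 1) / 2) * (n : ℝ)| ≤ K * (n : ℝ) ^ (1 / (2 + β)) := by
  obtain ⟨K, hK, hlog⟩ := total_adjacent_pairs_largest_index_general β hβ m hm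
  refine ⟨K * (1 + 1 / (1 / (2 + β))), by positivity, fun n hn => (hlog n hn).trans ?_⟩
  rw [mul_assoc]
  gcongr
  exact one_add_log_le_rpow (by exact_mod_cast hn) (by positivity)
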